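/- If for two moving labels lᵢ and lⱼ of a transition instance there is no edge between vᵢ and vⱼ in the movement graph G_M in either direction, then lᵢ and lⱼ do not overlap each other at any moment, regardless of the timing of their movements (in particular, whether they are executed consecutively in either order or simultaneously). -/

import Mathlib

open Set

/-- The closed axis-aligned unit square with lower-left corner `a`. -/
def unitSq (a : ℝ × ℝ) : Set (ℝ × ℝ) :=
  Set.Icc a.1 (a.1 + 1) ×ˢ Set.Icc a.2 (a.2 + 1)

/-- Two unit squares, given by their lower-left corners, overlap if their interiors intersect. -/
def Overlap (a b : ℝ × ℝ) : Prop :=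
  (interior (unitSq a) ∩ interior (unitSq b)).Nonempty

/-- `a` is the lower-left corner of one of the four candidate positions of point `p`
(the four closed unit squares having `p` as a corner). -/
def IsCandidate (p a : ℝ × ℝ) : Prop :=
  a = p ∨ a = (p.1 - 1, p.2) ∨ a = (p.1, p.2 - 1) ∨ a = (p.1 - 1, p.2 - 1)

/-- Two unit squares (given by lower-left corners) share an edge. -/
def SharesEdge (a b : ℝ × ℝ) : Prop :=
  (a.1 = b.1 ∧ (a.2 - b.2 = 1 ∨ b.2 - a.2 = 1)) ∨
  (a.2 = b.2 ∧ (a.1 - b.1 = 1 ∨ b.1 - a.1 = 1))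

/-- A movement of the unit-square label of point `p` from candidate position `S` to candidate
position `E`.  If `S` and `E` share an edge (a non-diagonal movement) we set `I = E` and the
label translates directly from `S` to `E`; if `S` and `E` are diagonally opposite (a diagonal
movement) the label translates through the specified intermediate candidate position `I`,
which shares an edge with both `S` and `E`. -/
structure Movement where
  p : ℝ × ℝ
  S : ℝ × ℝ
  I : ℝ × ℝ
  E : ℝ × ℝ
  candS : IsCandidate p S
  candI : IsCandidate p I
  candE : IsCandidate p E
  legs : (I = E ∧ SharesEdge S E) ∨
    (SharesEdge S I ∧ SharesEdge I E ∧ S.1 ≠ E.1 ∧ S.2 ≠ E.2)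

/-- A movement is diagonal if the start and end positions are diagonally opposite
(equivalently, the intermediate position differs from the end position). -/
def Movement.Diagonal (m : Movement) : Prop := m.I ≠ m.E

/-- Position (lower-left corner) of a moving label at time `t` after the start of its movement:
unit-speed axis-aligned translation, one unit of time per axis-aligned leg; the label rests at
its start position before the movement begins and at its end position after it is finished. -/
noncomputable def Movement.pos (m : Movement) (t : ℝ) : ℝ × ℝ :=
  if t ≤ 0 then m.S
  else if t ≤ 1 then m.S + t • (m.I - m.S)
  else if t ≤ 2 then m.I + (t - 1) • (m.E - m.I)
  else m.E

/-- Duration of a movement: one unit of time per axis-aligned translation. -/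
noncomputable def Movement.dur (m : Movement) : ℝ := if m.I = m.E then 1 else 2

/-- A transition instance: finitely many stationary labels (given by their lower-left corners)
and `n` moving labels, each with a prescribed movement, such that the labeling `L₁` formed by
the stationary labels together with the start positions of the moving labels is overlap-free,
and the labeling `L₂` formed by the stationary labels together with the end positions of the
moving labels is overlap-free. -/
structure TransitionInstance (k n : ℕ) where
  stat : Fin k → ℝ × ℝ
  mov : Fin n → Movement
  free_start : ∀ a b : Fin k ⊕ Fin n, a ≠ b →
    ¬ Overlap (Sum.elim stat (fun j => (mov j).S) a)
      (Sum.elim stat (fun j => (mov j).S) b)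
  free_end : ∀ a b : Fin k ⊕ Fin n, a ≠ b →
    ¬ Overlap (Sum.elim stat (fun j => (mov j).E) a)
      (Sum.elim stat (fun j => (mov j).E) b)

/-- A schedule `τ` of starting times is consecutive if the execution intervals of the movements
are pairwise non-overlapping, i.e. the movements are executed one after another in some order. -/
def Consecutive {k n : ℕ} (T : TransitionInstance k n) (τ : Fin n → ℝ) : Prop :=
  ∀ i j : Fin n, i ≠ j →
    τ i + (T.mov i).dur ≤ τ j ∨ τ j + (T.mov j).dur ≤ τ i

/-- Position (lower-left corner) of each label at global time `t`, when moving label `j`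
starts its movement at time `τ j`; stationary labels never move. -/
noncomputable def traj {k n : ℕ} (T : TransitionInstance k n) (τ : Fin n → ℝ) (t : ℝ) :
    Fin k ⊕ Fin n → ℝ × ℝ :=
  Sum.elim T.stat (fun j => (T.mov j).pos (t - τ j))

/-- The number of overlaps during the transition: the number of unordered pairs of distinct
labels whose interiors intersect at some moment. -/
noncomputable def overlapCount {k n : ℕ} (T : TransitionInstance k n) (τ : Fin n → ℝ) : ℕ :=
  Set.ncard {q : Sym2 (Fin k ⊕ Fin n) | ∃ a b : Fin k ⊕ Fin n,
    q = s(a, b) ∧ a ≠ b ∧ ∃ t : ℝ, Overlap (traj T τ t a) (traj T τ t b)}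

/-- The movement graph `G_M`: there is an edge from `vᵢ` to `vⱼ` whenever the intermediate
(if any) or end position of `Mⱼ` overlaps the start position of `Mᵢ`, or the end position of
`Mⱼ` overlaps the intermediate position (if any) of `Mᵢ`; in addition, if the intermediate
positions of `Mᵢ` and `Mⱼ` overlap and `i < j`, there is an edge from `vᵢ` to `vⱼ`. -/
def Edge {k n : ℕ} (T : TransitionInstance k n) (i j : Fin n) : Prop :=
  ((T.mov j).Diagonal ∧ Overlap (T.mov j).I (T.mov i).S) ∨
  Overlap (T.mov j).E (T.mov i).S ∨
  ((T.mov i).Diagonal ∧ Overlap (T.mov j).E (T.mov i).I) ∨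
  ((T.mov i).Diagonal ∧ (T.mov j).Diagonal ∧ Overlap (T.mov i).I (T.mov j).I ∧ i < j)

theorem overlap_iff (a b : ℝ × ℝ) :
    Overlap a b ↔ |a.1 - b.1| < 1 ∧ |a.2 - b.2| < 1 := by
  unfold Overlap unitSq
  rw [interior_prod_eq, interior_prod_eq]
  simp only [interior_Icc, abs_lt]
  constructor
  · rintro ⟨x, ⟨⟨h1, h2⟩, h3, h4⟩, ⟨h5, h6⟩, h7, h8⟩
    refine ⟨⟨?_, ?_⟩, ?_, ?_⟩ <;> linarith
  · rintro ⟨⟨h1, h2⟩, h3, h4⟩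
    refine ⟨((a.1 + b.1 + 1) / 2, (a.2 + b.2 + 1) / 2), ⟨⟨?_, ?_⟩, ?_, ?_⟩, ⟨?_, ?_⟩, ?_, ?_⟩ <;>
      dsimp only <;> linarith

theorem overlap_symm {a b : ℝ × ℝ} (h : Overlap a b) : Overlap b a := by
  unfold Overlap at *
  rwa [Set.inter_comm]

/-- One-dimensional fact: a point moving along a unit segment that is within distance `< 1` of `c`
has an endpoint within distance `< 1` of `c`. -/
theorem abs_endpoint {a b c s : ℝ} (h0 : 0 ≤ s) (h1 : s ≤ 1) (hab : a - b = 1 ∨ b - a = 1)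
    (h : |a + s * (b - a) - c| < 1) : |a - c| < 1 ∨ |b - c| < 1 := by
  rw [abs_lt] at h
  simp only [abs_lt]
  obtain ⟨h2, h3⟩ := h
  rcases hab with hab | hab
  · have hb : b - a = -1 := by linarith
    rw [hb] at h2 h3
    by_cases hc : a - c < 1
    · left; constructor <;> linarith
    · right; constructor <;> linarith
  · rw [hab] at h2 h3
    by_cases hc : -1 < a - c
    · left; constructor <;> linarith
    · right; constructor <;> linarith

theorem overlap_endpoint {A B c : ℝ × ℝ} {s : ℝ} (h0 : 0 ≤ s) (h1 : s ≤ 1)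
    (hAB : SharesEdge A B) (h : Overlap (A + s • (B - A)) c) : Overlap A c ∨ Overlap B c := by
  rw [overlap_iff] at h
  simp only [overlap_iff]
  simp only [Prod.fst_add, Prod.snd_add, Prod.smul_fst, Prod.smul_snd, Prod.fst_sub,
    Prod.snd_sub, smul_eq_mul] at h
  obtain ⟨hx, hy⟩ := h
  rcases hAB with ⟨he, hd⟩ | ⟨he, hd⟩
  · rw [← he, sub_self, mul_zero, add_zero] at hx
    rw [← he]
    exact (abs_endpoint h0 h1 hd hy).imp (fun h => ⟨hx, h⟩) (fun h => ⟨hx, h⟩)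
  · rw [← he, sub_self, mul_zero, add_zero] at hy
    rw [← he]
    exact (abs_endpoint h0 h1 hd hx).imp (fun h => ⟨h, hy⟩) (fun h => ⟨h, hy⟩)

/-- If a label overlaps `c` at some time, then one of its key positions does. -/
theorem pos_overlap (m : Movement) (t : ℝ) (c : ℝ × ℝ) (h : Overlap (m.pos t) c) :
    Overlap m.S c ∨ (m.Diagonal ∧ Overlap m.I c) ∨ Overlap m.E c := by
  have hI : Overlap m.I c → (m.Diagonal ∧ Overlap m.I c) ∨ Overlap m.E c := by
    intro ho
    by_cases hd : m.I = m.E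
    · right; rwa [← hd]
    · exact Or.inl ⟨hd, ho⟩
  have hSI : SharesEdge m.S m.I := by
    rcases m.legs with ⟨he, hs⟩ | ⟨hs, _⟩
    · rwa [he]
    · exact hs
  unfold Movement.pos at h
  split_ifs at h with h0 h1 h2
  · exact Or.inl h
  · exact (overlap_endpoint (by linarith) h1 hSI h).imp id hI
  · rcases m.legs with ⟨he, _⟩ | ⟨_, hs, _⟩
    · rw [he, sub_self, smul_zero, add_zero] at h
      exact Or.inr (Or.inr h)
    · rcases overlap_endpoint (by linarith) (by linarith) hs h with h | h
      · exact Or.inr (hI h)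
      · exact Or.inr (Or.inr h)
  · exact Or.inr (Or.inr h)

/-- If two moving labels of a transition instance are not connected by an edge of the movement
graph in either direction, then they never overlap each other, regardless of the timing of
their movements (in particular, whether they are executed consecutively in either order or
simultaneously). -/
theorem no_overlap_of_unrelated {k n : ℕ} (T : TransitionInstance k n) (i j : Fin n)
    (hij : i ≠ j) (h₁ : ¬ Edge T i j) (h₂ : ¬ Edge T j i) :
    ∀ τi τj t : ℝ, ¬ Overlap ((T.mov i).pos (t - τi)) ((T.mov j).pos (t - τj)) := by
  intro τi τj t hov
  have hS : ¬ Overlap (T.mov i).S (T.mov j).S :=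
    T.free_start (Sum.inr i) (Sum.inr j) (by simpa using hij)
  have hE : ¬ Overlap (T.mov i).E (T.mov j).E :=
    T.free_end (Sum.inr i) (Sum.inr j) (by simpa using hij)
  unfold Edge at h₁ h₂
  push Not at h₁ h₂
  obtain ⟨a1, a2, a3, a4⟩ := h₁
  obtain ⟨b1, b2, b3, b4⟩ := h₂
  rcases pos_overlap _ _ _ hov with h | ⟨hd, h⟩ | h <;>
    rcases pos_overlap _ _ _ (overlap_symm h) with h' | ⟨hd', h'⟩ | h'
  · exact hS (overlap_symm h')
  · exact a1 hd' h'
  · exact a2 h'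
  · exact b1 hd (overlap_symm h')
  · rcases lt_or_gt_of_ne hij with hl | hl
    · exact absurd hl (not_lt.mpr (a4 hd hd' (overlap_symm h')))
    · exact absurd hl (not_lt.mpr (b4 hd' hd h'))
  · exact a3 hd h'
  · exact b2 (overlap_symm h')
  · exact b3 hd' (overlap_symm h')
  · exact hE (overlap_symm h')
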